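/- Let t be real and let α, j be integers with α·j even. Define, for x ∈ (0,1), F_c(x) = exp(iπ(α² + j²)x/4)·exp(i(t/2)·log((1 − x)/x))·(x(1 − x))^{−1/4}·cos(πjαx/2) and F_s(x) the same expression with sin(πjαx/2) in place of cos(πjαx/2). Then ∫_{1/2}^{1} F_c(x) dx = exp(iπ(α + j)²/4)·conj(∫_{0}^{1/2} F_c(x) dx) and ∫_{1/2}^{1} F_s(x) dx = −exp(iπ(α + j)²/4)·conj(∫_{0}^{1/2} F_s(x) dx); consequently ∫_0^1 F_c = B_C + exp(iπ(α+j)²/4)·conj(B_C) and ∫_0^1 F_s = B_S − exp(iπ(α+j)²/4)·conj(B_S), where B_C = ∫_0^{1/2} F_c and B_S = ∫_0^{1/2} F_s. -/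

import Mathlib

open Real MeasureTheory

/-!
Under `x ↦ 1 - x` the weight `(x (1 - x)) ^ s` is invariant, `log ((1 - x) / x)` changes sign, and
the linear phase `c * x` becomes `c - c * x`; so reflection acts on the oscillatory kernel as
complex conjugation followed by multiplication by `exp (I * c)`. When `sin θ = 0`, the function
`cos (θ * x)` is reproduced and `sin (θ * x)` is negated, both up to the sign `cos θ = exp (I * θ)`.
The factors combine to `exp (I * (c + θ))`, which for `c = π (α² + j²) / 4` and `θ = π j α / 2` is
`exp (I * π (α + j)² / 4)`; for integers `α` and `j`, `sin θ = 0` says that `α * j` is even.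
-/

open scoped ComplexConjugate

section ConjReflection

variable {𝕜 : Type*} [RCLike 𝕜] {f : ℝ → 𝕜} {C : 𝕜} {d : ℝ}

lemma integral_sub_left_eq_mul_conj (hf : ∀ x, f (d - x) = C * conj (f x)) (a b : ℝ) :
    ∫ x in (d - b)..(d - a), f x = C * conj (∫ x in a..b, f x) := by
  rw [← intervalIntegral.integral_comp_sub_left, ← intervalIntegral.intervalIntegral_conj,
    ← intervalIntegral.integral_const_mul]
  simp only [hf]

lemma integral_half_self_eq_mul_conj (hf : ∀ x, f (d - x) = C * conj (f x)) :
    ∫ x in (d / 2)..d, f x = C * conj (∫ x in 0..(d / 2), f x) := by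
  rw [← integral_sub_left_eq_mul_conj hf, sub_half, sub_zero]

lemma integral_zero_self_eq_add_mul_conj (hf : ∀ x, f (d - x) = C * conj (f x))
    (hint : IntervalIntegrable f volume 0 d) :
    ∫ x in 0..d, f x = (∫ x in 0..(d / 2), f x) + C * conj (∫ x in 0..(d / 2), f x) := by
  have half_mem : d / 2 ∈ Set.uIcc 0 d := by
    rw [Set.mem_uIcc]
    grind
  obtain ⟨hleft, hright⟩ := (IntervalIntegrable.trans_iff half_mem).1 hint
  rw [← intervalIntegral.integral_add_adjacent_intervals hleft hright,
    integral_half_self_eq_mul_conj hf]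

end ConjReflection

lemma intervalIntegrable_rpow_mul_one_sub_rpow {r s : ℝ} (hr : -1 < r) (hs : -1 < s) :
    IntervalIntegrable (fun x : ℝ ↦ x ^ r * (1 - x) ^ s) volume 0 1 := by
  have re_pos {y : ℝ} (hy : -1 < y) : 0 < ((y : ℂ) + 1).re := by
    rw [Complex.add_re, Complex.ofReal_re, Complex.one_re]
    linarith
  have hbeta := Complex.betaIntegral_convergent (re_pos hr) (re_pos hs)
  simp only [add_sub_cancel_right] at hbeta
  refine hbeta.norm.congr_uIoo fun x hx ↦ ?_
  rw [Set.uIoo_of_le zero_le_one] at hx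
  beta_reduce
  rw [norm_mul, ← Complex.ofReal_one, ← Complex.ofReal_sub,
    Complex.norm_cpow_eq_rpow_re_of_pos hx.1,
    Complex.norm_cpow_eq_rpow_re_of_pos (sub_pos.2 hx.2), Complex.ofReal_re, Complex.ofReal_re]

lemma conj_exp_I_mul_ofReal (y : ℝ) :
    conj (Complex.exp (Complex.I * y)) = Complex.exp (Complex.I * (-y : ℝ)) := by
  rw [← Complex.exp_conj, map_mul, Complex.conj_I, Complex.conj_ofReal, Complex.ofReal_neg,
    mul_neg, neg_mul]

lemma exp_I_mul_ofReal_add (y z : ℝ) :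
    Complex.exp (Complex.I * (y + z : ℝ))
      = Complex.exp (Complex.I * y) * Complex.exp (Complex.I * z) := by
  rw [Complex.ofReal_add, mul_add, Complex.exp_add]

lemma exp_I_mul_ofReal_of_sin_eq_zero {θ : ℝ} (hθ : sin θ = 0) :
    Complex.exp (Complex.I * θ) = cos θ := by
  rw [mul_comm, Complex.exp_mul_I, ← Complex.ofReal_cos, ← Complex.ofReal_sin, hθ,
    Complex.ofReal_zero, zero_mul, add_zero]

/-- The oscillatory beta kernel `exp (icx) exp (iτ log ((1 - x) / x)) (x (1 - x)) ^ s` on `(0, 1)`: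
the common factor of the integrands `F_c` and `F_s`, for which `c = π (α² + j²) / 4`, `τ = t / 2`
and `s = -1 / 4`. The phases are real numbers cast to `ℂ`, and the power is a real power. -/
noncomputable def oscillatoryBetaKernel (c τ s x : ℝ) : ℂ :=
  Complex.exp (Complex.I * (c * x : ℝ)) * Complex.exp (Complex.I * (τ * log ((1 - x) / x) : ℝ))
    * ((x * (1 - x)) ^ s : ℝ)

section OscillatoryBetaKernel

variable {c τ s θ : ℝ}

lemma norm_oscillatoryBetaKernel (x : ℝ) :
    ‖oscillatoryBetaKernel c τ s x‖ = |(x * (1 - x)) ^ s| := by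
  rw [oscillatoryBetaKernel, norm_mul, norm_mul, Complex.norm_exp_I_mul_ofReal,
    Complex.norm_exp_I_mul_ofReal, one_mul, one_mul, Complex.norm_real, norm_eq_abs]

lemma intervalIntegrable_oscillatoryBetaKernel (hs : -1 < s) :
    IntervalIntegrable (oscillatoryBetaKernel c τ s) volume 0 1 := by
  have hmeas : Measurable (oscillatoryBetaKernel c τ s) := by
    unfold oscillatoryBetaKernel
    fun_prop
  refine (intervalIntegrable_rpow_mul_one_sub_rpow hs hs).mono_fun hmeas.aestronglyMeasurable ?_
  filter_upwards [ae_restrict_mem measurableSet_uIoc] with x hx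
  rw [Set.uIoc_of_le zero_le_one] at hx
  rw [norm_oscillatoryBetaKernel, mul_rpow hx.1.le (sub_nonneg.2 hx.2), norm_eq_abs]

lemma oscillatoryBetaKernel_one_sub (x : ℝ) :
    oscillatoryBetaKernel c τ s (1 - x)
      = Complex.exp (Complex.I * c) * conj (oscillatoryBetaKernel c τ s x) := by
  have hphase : c * (1 - x) = c + -(c * x) := by ring
  have hlog : log (x / (1 - x)) = -log ((1 - x) / x) := by rw [← log_inv, inv_div]
  simp only [oscillatoryBetaKernel, sub_sub_cancel, hlog, hphase, mul_neg, mul_comm (1 - x) x,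
    exp_I_mul_ofReal_add, map_mul, conj_exp_I_mul_ofReal, Complex.conj_ofReal, mul_assoc]

lemma oscillatoryBetaKernel_mul_cos_one_sub (hθ : sin θ = 0) (x : ℝ) :
    oscillatoryBetaKernel c τ s (1 - x) * cos (θ * (1 - x))
      = Complex.exp (Complex.I * (c + θ : ℝ))
        * conj (oscillatoryBetaKernel c τ s x * cos (θ * x)) := by
  have hcos : cos (θ * (1 - x)) = cos θ * cos (θ * x) := by
    rw [mul_one_sub, cos_sub, hθ, zero_mul, add_zero]
  rw [oscillatoryBetaKernel_one_sub, hcos, exp_I_mul_ofReal_add,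
    exp_I_mul_ofReal_of_sin_eq_zero hθ, map_mul, Complex.conj_ofReal, Complex.ofReal_mul]
  ring

lemma oscillatoryBetaKernel_mul_sin_one_sub (hθ : sin θ = 0) (x : ℝ) :
    oscillatoryBetaKernel c τ s (1 - x) * sin (θ * (1 - x))
      = -Complex.exp (Complex.I * (c + θ : ℝ))
        * conj (oscillatoryBetaKernel c τ s x * sin (θ * x)) := by
  have hsin : sin (θ * (1 - x)) = -(cos θ * sin (θ * x)) := by
    rw [mul_one_sub, sin_sub, hθ, zero_mul, zero_sub]
  rw [oscillatoryBetaKernel_one_sub, hsin, exp_I_mul_ofReal_add,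
    exp_I_mul_ofReal_of_sin_eq_zero hθ, map_mul, Complex.conj_ofReal, Complex.ofReal_neg,
    Complex.ofReal_mul]
  ring

lemma intervalIntegrable_oscillatoryBetaKernel_mul (hs : -1 < s) {w : ℝ → ℝ} (hw : Continuous w) :
    IntervalIntegrable (fun x ↦ oscillatoryBetaKernel c τ s x * w x) volume 0 1 :=
  (intervalIntegrable_oscillatoryBetaKernel hs).mul_continuousOn
    (Complex.continuous_ofReal.comp hw).continuousOn

theorem stmt6_general (hs : -1 < s) (hθ : sin θ = 0) {Fc Fs : ℝ → ℂ}
    (hFc : ∀ x, Fc x = oscillatoryBetaKernel c τ s x * cos (θ * x))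
    (hFs : ∀ x, Fs x = oscillatoryBetaKernel c τ s x * sin (θ * x)) :
    (∫ x in (1 / 2)..1, Fc x)
        = Complex.exp (Complex.I * (c + θ : ℝ)) * conj (∫ x in 0..(1 / 2), Fc x) ∧
    (∫ x in (1 / 2)..1, Fs x)
        = -(Complex.exp (Complex.I * (c + θ : ℝ)) * conj (∫ x in 0..(1 / 2), Fs x)) ∧
    (∫ x in 0..1, Fc x)
        = (∫ x in 0..(1 / 2), Fc x)
          + Complex.exp (Complex.I * (c + θ : ℝ)) * conj (∫ x in 0..(1 / 2), Fc x) ∧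
    (∫ x in 0..1, Fs x)
        = (∫ x in 0..(1 / 2), Fs x)
          - Complex.exp (Complex.I * (c + θ : ℝ)) * conj (∫ x in 0..(1 / 2), Fs x) := by
  obtain rfl := funext hFc
  obtain rfl := funext hFs
  have hcos := oscillatoryBetaKernel_mul_cos_one_sub (c := c) (τ := τ) (s := s) hθ
  have hsin := oscillatoryBetaKernel_mul_sin_one_sub (c := c) (τ := τ) (s := s) hθ
  have hcos_int := intervalIntegrable_oscillatoryBetaKernel_mul (c := c) (τ := τ) hs
    (w := fun x ↦ cos (θ * x)) (by fun_prop)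
  have hsin_int := intervalIntegrable_oscillatoryBetaKernel_mul (c := c) (τ := τ) hs
    (w := fun x ↦ sin (θ * x)) (by fun_prop)
  rw [← neg_mul, sub_eq_add_neg, ← neg_mul]
  exact ⟨integral_half_self_eq_mul_conj hcos, integral_half_self_eq_mul_conj hsin,
    integral_zero_self_eq_add_mul_conj hcos hcos_int,
    integral_zero_self_eq_add_mul_conj hsin hsin_int⟩

end OscillatoryBetaKernel

lemma sin_pi_mul_mul_div_two_eq_zero_of_even {m n : ℤ} (h : Even (m * n)) :
    sin (π * n * m / 2) = 0 := by
  obtain ⟨k, hk⟩ := h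
  have hkπ : π * n * m / 2 = k * π := by
    have : (m : ℝ) * n = k + k := mod_cast hk
    linear_combination π / 2 * this
  rw [hkπ, sin_int_mul_pi]

/-- The exact splitting identities (28a,b) of the paper, obtained from the
substitution `x ↦ 1 − x` on `[1/2, 1]`. -/
theorem stmt6 (t : ℝ) (α j : ℤ) (hEven : Even (α * j))
    (Fc Fs : ℝ → ℂ)
    (hFc : ∀ x : ℝ, Fc x =
      Complex.exp (Complex.I * ((π * ((α : ℝ) ^ 2 + (j : ℝ) ^ 2) * x / 4 : ℝ) : ℂ))
        * Complex.exp (Complex.I * ((t / 2 * Real.log ((1 - x) / x) : ℝ) : ℂ))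
        * (((x * (1 - x)) ^ (-(1 : ℝ) / 4) : ℝ) : ℂ)
        * ((Real.cos (π * (j : ℝ) * (α : ℝ) * x / 2) : ℝ) : ℂ))
    (hFs : ∀ x : ℝ, Fs x =
      Complex.exp (Complex.I * ((π * ((α : ℝ) ^ 2 + (j : ℝ) ^ 2) * x / 4 : ℝ) : ℂ))
        * Complex.exp (Complex.I * ((t / 2 * Real.log ((1 - x) / x) : ℝ) : ℂ))
        * (((x * (1 - x)) ^ (-(1 : ℝ) / 4) : ℝ) : ℂ)
        * ((Real.sin (π * (j : ℝ) * (α : ℝ) * x / 2) : ℝ) : ℂ)) :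
    (∫ x in (1/2 : ℝ)..1, Fc x)
        = Complex.exp (Complex.I * ((π * ((α : ℝ) + (j : ℝ)) ^ 2 / 4 : ℝ) : ℂ))
            * (starRingEnd ℂ) (∫ x in (0 : ℝ)..(1/2 : ℝ), Fc x) ∧
    (∫ x in (1/2 : ℝ)..1, Fs x)
        = -(Complex.exp (Complex.I * ((π * ((α : ℝ) + (j : ℝ)) ^ 2 / 4 : ℝ) : ℂ))
            * (starRingEnd ℂ) (∫ x in (0 : ℝ)..(1/2 : ℝ), Fs x)) ∧
    (∫ x in (0 : ℝ)..1, Fc x)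
        = (∫ x in (0 : ℝ)..(1/2 : ℝ), Fc x)
          + Complex.exp (Complex.I * ((π * ((α : ℝ) + (j : ℝ)) ^ 2 / 4 : ℝ) : ℂ))
            * (starRingEnd ℂ) (∫ x in (0 : ℝ)..(1/2 : ℝ), Fc x) ∧
    (∫ x in (0 : ℝ)..1, Fs x)
        = (∫ x in (0 : ℝ)..(1/2 : ℝ), Fs x)
          - Complex.exp (Complex.I * ((π * ((α : ℝ) + (j : ℝ)) ^ 2 / 4 : ℝ) : ℂ))
            * (starRingEnd ℂ) (∫ x in (0 : ℝ)..(1/2 : ℝ), Fs x) := by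
  have hphase : π * ((α : ℝ) + j) ^ 2 / 4
      = π * ((α : ℝ) ^ 2 + (j : ℝ) ^ 2) / 4 + π * j * α / 2 := by ring
  rw [hphase]
  exact stmt6_general (τ := t / 2) (s := -1 / 4) (by norm_num)
    (sin_pi_mul_mul_div_two_eq_zero_of_even hEven)
    (fun x ↦ by simp only [hFc, oscillatoryBetaKernel, div_mul_eq_mul_div])
    (fun x ↦ by simp only [hFs, oscillatoryBetaKernel, div_mul_eq_mul_div])
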